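/- Let z ∈ ℂ with Im z ≠ 0 and let ζ be the square root of z with Im ζ > 0. Let (x_n)_{n∈ℤ} be pairwise distinct points of ℝ³ and let c : ℤ → ℂ satisfy Σ_{n∈ℤ} |c_n| < ∞ and Σ_{m≠n} |c_m|·|c_n|/|x_m − x_n| < ∞. Then the integral on the right-hand side below is finite and (1/Im z) · Im[ (iζ/4π)·Σ_{n∈ℤ} |c_n|² + Σ_{m,n∈ℤ, m≠n} conj(c_m)·c_n·g(ζ; x_m − x_n) ] = (1/(2π)³) · ∫_{ℝ³} |Σ_{n∈ℤ} c_n·e^{−i k·x_n}|² / ((|k|² − Re z)² + (Im z)²) dk; in particular the left-hand side is nonnegative. -/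

import Mathlib

open MeasureTheory Complex Real

/-- The Green kernel `g(ζ; v) = e^{iζ|v|}/(4π|v|)` for a vector `v ∈ ℝ³`. -/
noncomputable def greenK (ζ : ℂ) (v : EuclideanSpace ℝ (Fin 3)) : ℂ :=
  Complex.exp (Complex.I * ζ * (‖v‖ : ℝ)) / ((4 * Real.pi * ‖v‖ : ℝ) : ℂ)

/-- The "Fourier series" `ĥ(k) = Σ_n c_n e^{-i k·x_n}`. -/
noncomputable def hhat (c : ℤ → ℂ) (x : ℤ → EuclideanSpace ℝ (Fin 3))
    (k : EuclideanSpace ℝ (Fin 3)) : ℂ :=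
  ∑' n : ℤ, c n * Complex.exp (-Complex.I * ((inner ℝ k (x n) : ℝ) : ℂ))

/-!
Write `ĥ` for the exponential sum. Expanding `|ĥ(k)|²` and integrating term by term reduces the
claim to the Fourier transform of the integrable weight `w(k) = 1 / ||k|² - z|²`, which by Fourier
inversion is found from `∫ e^{-i k·v} g(ζ; v) dv = 1 / (|k|² - z)`: taking imaginary parts,
`(Im z) w` is the Fourier transform of `v ↦ Im g(ζ; v)`, whose continuous extension to `v = 0` has
the value `Im (iζ/4π)`, which is where the diagonal term comes from. The transform of `g` is
computed by descent to dimension one: integrating `g` over the planes orthogonal to `k` gives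
`(i/2ζ) e^{iζ|t|}`.
-/

open Set Module
open scoped ComplexConjugate InnerProductSpace FourierTransform

section Fubini

variable {F : Type*} [NormedAddCommGroup F] [NormedSpace ℝ F]

lemma image_sqrt_sq_add_sq_Ioi (t : ℝ) :
    (fun ρ : ℝ => √(t ^ 2 + ρ ^ 2)) '' Ioi 0 = Ioi |t| := by
  ext r
  simp only [mem_image, mem_Ioi]
  constructor
  · rintro ⟨ρ, hρ, rfl⟩
    rw [← sqrt_sq_eq_abs]
    exact sqrt_lt_sqrt (sq_nonneg t) (by simpa using pow_pos hρ 2)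
  · intro hr
    have ht : t ^ 2 < r ^ 2 := sq_lt_sq.2 (hr.trans_le (le_abs_self r))
    refine ⟨√(r ^ 2 - t ^ 2), sqrt_pos.2 (sub_pos.2 ht), ?_⟩
    rw [sq_sqrt (sub_pos.2 ht).le, add_sub_cancel, sqrt_sq ((abs_nonneg t).trans hr.le)]

lemma integral_Ioi_smul_comp_sqrt_sq_add_sq (f : ℝ → F) (t : ℝ) :
    ∫ ρ in Ioi (0 : ℝ), ρ • f √(t ^ 2 + ρ ^ 2) = ∫ r in Ioi |t|, r • f r := by
  have hpos : ∀ ρ ∈ Ioi (0 : ℝ), 0 < √(t ^ 2 + ρ ^ 2) := fun ρ (hρ : 0 < ρ) => by positivity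
  have hderiv : ∀ ρ ∈ Ioi (0 : ℝ), HasDerivWithinAt (fun ρ : ℝ => √(t ^ 2 + ρ ^ 2))
      (ρ / √(t ^ 2 + ρ ^ 2)) (Ioi 0) ρ := fun ρ hρ => by
    have hsq : HasDerivAt (fun ρ : ℝ => t ^ 2 + ρ ^ 2) (2 * ρ) ρ := by
      simpa using (hasDerivAt_pow 2 ρ).const_add (t ^ 2)
    exact (hsq.sqrt (sqrt_pos.1 (hpos ρ hρ)).ne').hasDerivWithinAt.congr_deriv
      (mul_div_mul_left _ _ two_ne_zero)
  have hinj : InjOn (fun ρ : ℝ => √(t ^ 2 + ρ ^ 2)) (Ioi 0) := fun a ha b hb hab => by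
    rw [sqrt_inj (by positivity) (by positivity), add_right_inj] at hab
    exact (pow_left_inj₀ (le_of_lt ha) (le_of_lt hb) two_ne_zero).1 hab
  rw [← image_sqrt_sq_add_sq_Ioi,
    integral_image_eq_integral_abs_deriv_smul measurableSet_Ioi hderiv hinj]
  refine setIntegral_congr_fun measurableSet_Ioi fun ρ hρ => ?_
  simp only [abs_of_pos (div_pos hρ (hpos ρ hρ)), smul_smul, div_mul_cancel₀ _ (hpos ρ hρ).ne']

variable {P : Type*} [NormedAddCommGroup P] [InnerProductSpace ℝ P] [FiniteDimensional ℝ P]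
  [MeasurableSpace P] [BorelSpace P]

lemma integral_comp_norm_of_finrank_eq_two (hP : finrank ℝ P = 2) (f : ℝ → F) :
    ∫ y : P, f ‖y‖ = (2 * π) • ∫ ρ in Ioi (0 : ℝ), ρ • f ρ := by
  have : Nontrivial P := nontrivial_of_finrank_pos (R := ℝ) (by omega)
  have hball : volume.real (Metric.ball (0 : P) 1) = π := by
    simp [measureReal_def, InnerProductSpace.volume_ball_of_dim_even (k := 1) hP, pi_pos.le]
  simp only [integral_fun_norm_addHaar, hP, hball, Nat.add_one_sub_one, pow_one, mul_smul,
    ofNat_smul_eq_nsmul]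

lemma integral_comp_sqrt_sq_add_norm_sq (hP : finrank ℝ P = 2) (f : ℝ → F) (t : ℝ) :
    ∫ y : P, f √(t ^ 2 + ‖y‖ ^ 2) = (2 * π) • ∫ r in Ioi |t|, r • f r := by
  rw [integral_comp_norm_of_finrank_eq_two hP (fun ρ => f √(t ^ 2 + ρ ^ 2)),
    integral_Ioi_smul_comp_sqrt_sq_add_sq]

variable {E : Type*} [NormedAddCommGroup E] [InnerProductSpace ℝ E] [FiniteDimensional ℝ E]
  [MeasurableSpace E] [BorelSpace E]

lemma exists_measurePreserving_span_singleton_prod_orthogonal {u : E} (hu : ‖u‖ = 1) :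
    ∃ e : ℝ × (ℝ ∙ u)ᗮ ≃ᵐ E, MeasurePreserving e ∧ ∀ q, e q = q.1 • u + q.2 := by
  let toE : WithLp 2 (ℝ × (ℝ ∙ u)ᗮ) ≃ₗᵢ[ℝ] E :=
    (LinearIsometryEquiv.withLpProdCongr 2 (LinearIsometryEquiv.toSpanUnitSingleton u hu)
      (LinearIsometryEquiv.refl ℝ _)).trans (ℝ ∙ u).orthogonalDecomposition.symm
  refine ⟨(MeasurableEquiv.toLp 2 _).trans toE.toMeasurableEquiv,
    toE.measurePreserving.comp (WithLp.volume_preserving_toLp ℝ (ℝ ∙ u)ᗮ), fun q => ?_⟩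
  simp [toE]

lemma integral_inner_norm_eq_integral_integral {u : E} (hu : ‖u‖ = 1) {f : ℝ → ℝ → F}
    (hf : Integrable fun v : E => f ⟪u, v⟫_ℝ ‖v‖) :
    ∫ v : E, f ⟪u, v⟫_ℝ ‖v‖ = ∫ t : ℝ, ∫ y : (ℝ ∙ u)ᗮ, f t √(t ^ 2 + ‖y‖ ^ 2) := by
  obtain ⟨e, he, he_apply⟩ := exists_measurePreserving_span_singleton_prod_orthogonal hu
  have hinner (q : ℝ × (ℝ ∙ u)ᗮ) : ⟪u, (q.2 : E)⟫_ℝ = 0 :=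
    Submodule.mem_orthogonal_singleton_iff_inner_right.1 q.2.2
  have hcoord (q : ℝ × (ℝ ∙ u)ᗮ) :
      f ⟪u, e q⟫_ℝ ‖e q‖ = f q.1 √(q.1 ^ 2 + ‖q.2‖ ^ 2) := by
    have hnorm : ‖e q‖ = √(q.1 ^ 2 + ‖q.2‖ ^ 2) := by
      rw [eq_comm, sqrt_eq_iff_eq_sq (by positivity) (norm_nonneg _), he_apply, sq ‖_ + _‖,
        norm_add_sq_eq_norm_sq_add_norm_sq_real (by rw [inner_smul_left, hinner, mul_zero])]
      simp [norm_smul, hu, sq]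
    rw [hnorm, he_apply, inner_add_right, inner_smul_right, hinner, real_inner_self_eq_norm_sq, hu]
    simp
  rw [← he.integrable_comp_emb e.measurableEmbedding] at hf
  rw [← he.integral_comp e.measurableEmbedding]
  simp only [Function.comp_def, hcoord] at hf ⊢
  exact integral_prod _ hf

end Fubini

section FourierInversion

lemma integrable_exp_mul_of_re_eq_zero {X : Type*} [TopologicalSpace X] [MeasurableSpace X]
    [OpensMeasurableSpace X] {μ : Measure X} {φ f : X → ℂ} (hφ : Continuous φ)
    (hre : ∀ x, (φ x).re = 0) (hf : Integrable f μ) :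
    Integrable (fun x => cexp (φ x) * f x) μ :=
  hf.bdd_mul (c := 1) (Complex.continuous_exp.comp hφ).aestronglyMeasurable
    (.of_forall fun x => by simp [norm_exp, hre])

variable {E : Type*} [NormedAddCommGroup E] [InnerProductSpace ℝ E] [FiniteDimensional ℝ E]
  [MeasurableSpace E] [BorelSpace E]

lemma integral_exp_inner_mul_of_integral_exp_neg_inner_mul {f g : E → ℂ} (hf : Continuous f)
    (hf_int : Integrable f) (hg_int : Integrable g)
    (hfg : ∀ k, ∫ v, cexp (-I * ⟪v, k⟫_ℝ) * f v = g k) (v : E) :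
    ∫ k, cexp (I * ⟪k, v⟫_ℝ) * g k = (2 * π) ^ finrank ℝ E * f v := by
  have hfourier : 𝓕 f = fun w => g ((2 * π) • w) := by
    funext w
    rw [Real.fourier_eq', ← hfg]
    refine integral_congr_ae (.of_forall fun u => ?_)
    simp only [smul_eq_mul, inner_smul_right]
    push_cast
    ring_nf
  have hinv : 𝓕⁻ (𝓕 f) v = f v := congrFun (hf.fourierInv_fourier_eq hf_int
    (hfourier ▸ hg_int.comp_smul (by positivity))) v
  have hscale := Measure.integral_comp_smul volume
    (fun k : E => cexp (I * ⟪k, v⟫_ℝ) * g k) (2 * π)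
  rw [← hinv, Real.fourierInv_eq', hfourier, eq_comm]
  calc (2 * π) ^ finrank ℝ E * ∫ w, cexp ((2 * π * ⟪w, v⟫_ℝ : ℝ) * I) • g ((2 * π) • w)
      = (2 * π) ^ finrank ℝ E * ∫ w, cexp (I * ⟪(2 * π) • w, v⟫_ℝ) * g ((2 * π) • w) := by
        simp only [smul_eq_mul, real_inner_smul_left, mul_comm I]
    _ = ∫ k, cexp (I * ⟪k, v⟫_ℝ) * g k := by
        rw [hscale, abs_of_pos (by positivity), Complex.real_smul, ← mul_assoc]
        push_cast
        rw [mul_inv_cancel₀ (by simp [pi_ne_zero]), one_mul]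

end FourierInversion

section ResolventWeight

variable {E : Type*} [Norm E]

/-- The weight `1 / ||k|² - z|²`, the squared modulus of the symbol of the resolvent
`(-Δ - z)⁻¹`. -/
noncomputable def resolventWeight (z : ℂ) (k : E) : ℝ :=
  1 / ((‖k‖ ^ 2 - z.re) ^ 2 + z.im ^ 2)

lemma ofReal_im_mul_resolventWeight (z : ℂ) (k : E) :
    ((z.im * resolventWeight z k : ℝ) : ℂ) =
      (1 / (‖k‖ ^ 2 - z) - 1 / (‖k‖ ^ 2 - conj z)) / (2 * I) := by
  have hconj : (1 : ℂ) / (‖k‖ ^ 2 - conj z) = conj (1 / (‖k‖ ^ 2 - z)) := by simp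
  rw [hconj, ← im_eq_sub_conj]
  congr 1
  simp [resolventWeight, normSq_apply, sq, div_eq_mul_inv]

lemma resolventWeight_nonneg (z : ℂ) (k : E) : 0 ≤ resolventWeight z k := by
  unfold resolventWeight
  positivity

lemma resolventWeight_le {z : ℂ} (hz : z.im ≠ 0) (k : E) :
    resolventWeight z k ≤
      (2 + 2 * (1 + z.re) ^ 2 / z.im ^ 2) * (1 + ‖k‖ ^ 2) ^ (-4 / 2 : ℝ) := by
  have hrpow : (1 + ‖k‖ ^ 2) ^ (-4 / 2 : ℝ) = 1 / (1 + ‖k‖ ^ 2) ^ 2 := by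
    rw [show (-4 / 2 : ℝ) = -(2 : ℕ) by norm_num, rpow_neg (by positivity), rpow_natCast, one_div]
  rw [hrpow, resolventWeight, mul_one_div, div_le_div_iff₀ (by positivity) (by positivity), one_mul]
  set d := ‖k‖ ^ 2 - z.re
  calc (1 + ‖k‖ ^ 2) ^ 2 = (d + (1 + z.re)) ^ 2 := by ring
    _ ≤ 2 * (d ^ 2 + (1 + z.re) ^ 2) := add_sq_le
    _ ≤ 2 * d ^ 2 + 2 * (1 + z.re) ^ 2 +
          (2 * z.im ^ 2 + 2 * (1 + z.re) ^ 2 / z.im ^ 2 * d ^ 2) := by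
        rw [mul_add]; exact le_add_of_nonneg_right (by positivity)
    _ = (2 + 2 * (1 + z.re) ^ 2 / z.im ^ 2) * (d ^ 2 + z.im ^ 2) := by
        field_simp
        ring

end ResolventWeight

section Resolvent

/-- The radial profile of the Green kernel, with the value at `r = 0` chosen as the constant term
`iζ/4π` of the expansion `e^{iζr}/(4πr) = 1/(4πr) + iζ/4π + O(r)`. The singular term is real, so
the imaginary part of the profile is continuous. -/
noncomputable def regularizedGreen (ζ : ℂ) (r : ℝ) : ℂ :=
  if r = 0 then I * ζ / (4 * π : ℝ) else cexp (I * ζ * r) / (4 * π * r : ℝ)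

variable {ζ : ℂ}

lemma im_regularizedGreen (ζ : ℂ) (r : ℝ) :
    (regularizedGreen ζ r).im = rexp (-ζ.im * r) * sinc (ζ.re * r) * (ζ.re / (4 * π)) := by
  rw [regularizedGreen]
  split_ifs with hr
  · rw [div_ofReal_im]
    simp [hr]
  · rw [div_ofReal_im, exp_im]
    by_cases hζ : ζ.re = 0
    · simp [hζ]
    · rw [sinc_of_ne_zero (mul_ne_zero hζ hr)]
      have hre : (I * ζ * r).re = -ζ.im * r := by simp
      have him : (I * ζ * r).im = ζ.re * r := by simp
      rw [hre, him]
      field_simp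

lemma continuous_im_regularizedGreen (ζ : ℂ) : Continuous fun r => (regularizedGreen ζ r).im := by
  simp only [im_regularizedGreen]
  have := continuous_sinc
  fun_prop

lemma conj_regularizedGreen (ζ : ℂ) (r : ℝ) :
    conj (regularizedGreen ζ r) = regularizedGreen (-conj ζ) r := by
  have hexp : conj (cexp (I * ζ * r)) = cexp (I * -conj ζ * r) := by
    rw [← exp_conj]; simp
  simp only [regularizedGreen, apply_ite conj, map_div₀, map_mul, conj_ofReal, conj_I, hexp,
    neg_mul, mul_neg]

lemma ofReal_im_regularizedGreen (ζ : ℂ) (r : ℝ) :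
    ((regularizedGreen ζ r).im : ℂ) =
      (regularizedGreen ζ r - regularizedGreen (-conj ζ) r) / (2 * I) := by
  rw [im_eq_sub_conj, conj_regularizedGreen]

lemma norm_regularizedGreen {r : ℝ} (hr : 0 < r) :
    ‖regularizedGreen ζ r‖ = rexp (-ζ.im * r) / (4 * π * r) := by
  have hre : (I * ζ * r).re = -ζ.im * r := by simp
  rw [regularizedGreen, if_neg hr.ne', norm_div, norm_exp, hre, norm_real,
    norm_of_nonneg (by positivity)]

lemma integral_Ioi_smul_regularizedGreen (hζ : 0 < ζ.im) {a : ℝ} (ha : 0 ≤ a) :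
    ∫ r in Ioi a, r • regularizedGreen ζ r = I / (4 * π * ζ) * cexp (I * ζ * a) := by
  have hζ0 : ζ ≠ 0 := by rintro rfl; simp at hζ
  have hcancel : ∀ r ∈ Ioi a,
      r • regularizedGreen ζ r = 1 / (4 * π : ℂ) * cexp (I * ζ * r) := fun r hr => by
    have hr0 : (r : ℂ) ≠ 0 := ofReal_ne_zero.2 (ha.trans_lt hr).ne'
    rw [regularizedGreen, if_neg (ha.trans_lt hr).ne', real_smul]
    push_cast
    field_simp
  rw [setIntegral_congr_fun measurableSet_Ioi hcancel, integral_const_mul,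
    integral_exp_mul_complex_Ioi (by simpa using hζ)]
  field_simp
  rw [I_sq]

lemma integral_orthogonal_regularizedGreen {P : Type*} [NormedAddCommGroup P]
    [InnerProductSpace ℝ P] [FiniteDimensional ℝ P] [MeasurableSpace P] [BorelSpace P]
    (hP : finrank ℝ P = 2) (hζ : 0 < ζ.im) (t : ℝ) :
    ∫ y : P, regularizedGreen ζ √(t ^ 2 + ‖y‖ ^ 2) = I / (2 * ζ) * cexp (I * ζ * |t|) := by
  have hζ0 : ζ ≠ 0 := by rintro rfl; simp at hζ
  rw [integral_comp_sqrt_sq_add_norm_sq hP, integral_Ioi_smul_regularizedGreen hζ (abs_nonneg t),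
    real_smul]
  push_cast
  field_simp
  norm_num

lemma integral_exp_neg_mul_exp_abs (hζ : 0 < ζ.im) (s : ℝ) :
    ∫ t : ℝ, cexp (-I * s * t) * cexp (I * ζ * |t|) = 2 * ζ * I / (ζ ^ 2 - s ^ 2) := by
  have hneg_re : (I * (ζ - s)).re < 0 := by simpa using hζ
  have hpos_re : 0 < (-I * (ζ + s)).re := by simpa using hζ
  have hsub : ζ - s ≠ 0 := by intro h; simp [h] at hneg_re
  have hadd : ζ + s ≠ 0 := by intro h; simp [h] at hpos_re
  have hIoi : EqOn (fun t : ℝ => cexp (-I * s * t) * cexp (I * ζ * |t|))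
      (fun t : ℝ => cexp (I * (ζ - s) * t)) (Ioi 0) := fun t (ht : 0 < t) => by
    simp only [abs_of_pos ht, ← Complex.exp_add]
    ring_nf
  have hIic : EqOn (fun t : ℝ => cexp (-I * s * t) * cexp (I * ζ * |t|))
      (fun t : ℝ => cexp (-I * (ζ + s) * t)) (Iic 0) := fun t (ht : t ≤ 0) => by
    simp only [abs_of_nonpos ht, ← Complex.exp_add]
    push_cast
    ring_nf
  rw [← intervalIntegral.integral_Iic_add_Ioi
      ((integrableOn_exp_mul_complex_Iic hpos_re 0).congr_fun hIic.symm measurableSet_Iic)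
      ((integrableOn_exp_mul_complex_Ioi hneg_re 0).congr_fun hIoi.symm measurableSet_Ioi),
    setIntegral_congr_fun measurableSet_Ioi hIoi, setIntegral_congr_fun measurableSet_Iic hIic,
    integral_exp_mul_complex_Ioi hneg_re, integral_exp_mul_complex_Iic hpos_re, sq_sub_sq]
  simp only [ofReal_zero, mul_zero, Complex.exp_zero]
  field_simp
  rw [I_sq]
  ring

variable {E : Type*} [NormedAddCommGroup E] [InnerProductSpace ℝ E] [FiniteDimensional ℝ E]
  [MeasurableSpace E] [BorelSpace E]

lemma integrable_regularizedGreen_norm (hE : finrank ℝ E = 3) (hζ : 0 < ζ.im) :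
    Integrable fun v : E => regularizedGreen ζ ‖v‖ := by
  have : Nontrivial E := nontrivial_of_finrank_pos (R := ℝ) (by omega)
  rw [integrable_fun_norm_addHaar, hE]
  have hbound : IntegrableOn (fun r : ℝ => 1 / (4 * π) * (r ^ (1 : ℝ) * rexp (-ζ.im * r ^ (1 : ℝ))))
      (Ioi 0) :=
    (integrableOn_rpow_mul_exp_neg_mul_rpow (by norm_num) one_pos hζ).const_mul _
  refine hbound.mono' (Measurable.aestronglyMeasurable ?_) ?_
  · unfold regularizedGreen
    exact (measurable_id.pow_const 2).smul
      (.ite (measurableSet_singleton 0) measurable_const (by fun_prop))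
  · refine (ae_restrict_iff' measurableSet_Ioi).2 (.of_forall fun r (hr : 0 < r) => le_of_eq ?_)
    rw [norm_smul, norm_regularizedGreen hr, norm_of_nonneg (by positivity)]
    simp only [rpow_one, Nat.add_one_sub_one]
    field_simp

lemma integral_exp_neg_inner_mul_regularizedGreen (hE : finrank ℝ E = 3) (hζ : 0 < ζ.im) (k : E) :
    ∫ v : E, cexp (-I * ⟪v, k⟫_ℝ) * regularizedGreen ζ ‖v‖ = 1 / (‖k‖ ^ 2 - ζ ^ 2) := by
  have hζ0 : ζ ≠ 0 := by rintro rfl; simp at hζ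
  have : Nontrivial E := nontrivial_of_finrank_pos (R := ℝ) (by omega)
  obtain ⟨u, hu, hk⟩ : ∃ u : E, ‖u‖ = 1 ∧ k = ‖k‖ • u := by
    rcases eq_or_ne k 0 with rfl | hk
    · exact (exists_norm_eq E zero_le_one).imp fun u hu => ⟨hu, by simp⟩
    · exact ⟨‖k‖⁻¹ • k, norm_smul_inv_norm hk, by simp [smul_smul, hk]⟩
  have h_int : Integrable fun v : E =>
      cexp (-I * ‖k‖ * ⟪u, v⟫_ℝ) * regularizedGreen ζ ‖v‖ :=
    integrable_exp_mul_of_re_eq_zero (by fun_prop) (by simp)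
      (integrable_regularizedGreen_norm hE hζ)
  have hplane : finrank ℝ (ℝ ∙ u)ᗮ = 2 :=
    have : Fact (finrank ℝ E = 2 + 1) := ⟨hE⟩
    Submodule.finrank_orthogonal_span_singleton (norm_ne_zero_iff.1 (by simp [hu]))
  calc ∫ v : E, cexp (-I * ⟪v, k⟫_ℝ) * regularizedGreen ζ ‖v‖
      = ∫ v : E, cexp (-I * ‖k‖ * ⟪u, v⟫_ℝ) * regularizedGreen ζ ‖v‖ := by
        refine integral_congr_ae (.of_forall fun v => ?_)
        have hinner : ⟪v, k⟫_ℝ = ‖k‖ * ⟪u, v⟫_ℝ := by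
          rw [real_inner_comm, hk, real_inner_smul_left, ← hk]
        simp only [hinner, ofReal_mul, mul_assoc]
    _ = ∫ t : ℝ, ∫ y : (ℝ ∙ u)ᗮ,
          cexp (-I * ‖k‖ * t) * regularizedGreen ζ √(t ^ 2 + ‖y‖ ^ 2) :=
        integral_inner_norm_eq_integral_integral hu
          (f := fun t r => cexp (-I * ‖k‖ * t) * regularizedGreen ζ r) h_int
    _ = I / (2 * ζ) * ∫ t : ℝ, cexp (-I * ‖k‖ * t) * cexp (I * ζ * |t|) := by
        rw [← integral_const_mul]
        simp only [integral_const_mul, integral_orthogonal_regularizedGreen hplane hζ,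
          mul_left_comm]
    _ = 1 / (‖k‖ ^ 2 - ζ ^ 2) := by
        rw [integral_exp_neg_mul_exp_abs hζ, ← neg_sub (ζ ^ 2), one_div_neg_eq_neg_one_div]
        field_simp
        rw [I_sq, neg_div]

lemma integrable_resolventWeight {z : ℂ} (hz : z.im ≠ 0) (hE : finrank ℝ E < 4) :
    Integrable fun k : E => resolventWeight z k := by
  have hbound := (integrable_rpow_neg_one_add_norm_sq (E := E) (μ := volume) (r := 4)
    (by exact_mod_cast hE)).const_mul (2 + 2 * (1 + z.re) ^ 2 / z.im ^ 2)
  refine hbound.mono' (Measurable.aestronglyMeasurable ?_) (.of_forall fun k => ?_)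
  · unfold resolventWeight
    fun_prop
  · rw [norm_of_nonneg (resolventWeight_nonneg z k)]
    exact resolventWeight_le hz k

lemma integral_exp_neg_inner_mul_im_regularizedGreen (hE : finrank ℝ E = 3) (hζ : 0 < ζ.im)
    (k : E) :
    ∫ v : E, cexp (-I * ⟪v, k⟫_ℝ) * (regularizedGreen ζ ‖v‖).im =
      ((ζ ^ 2).im * resolventWeight (ζ ^ 2) k : ℝ) := by
  have hconj : 0 < (-conj ζ).im := by simpa using hζ
  have h_int {ζ : ℂ} (hζ : 0 < ζ.im) :
      Integrable fun v : E => cexp (-I * ⟪v, k⟫_ℝ) * regularizedGreen ζ ‖v‖ :=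
    integrable_exp_mul_of_re_eq_zero (by fun_prop) (by simp)
      (integrable_regularizedGreen_norm hE hζ)
  simp only [ofReal_im_regularizedGreen, mul_div_assoc', mul_sub]
  rw [integral_div, integral_sub (h_int hζ) (h_int hconj),
    integral_exp_neg_inner_mul_regularizedGreen hE hζ,
    integral_exp_neg_inner_mul_regularizedGreen hE hconj, ofReal_im_mul_resolventWeight,
    neg_sq, map_pow]

lemma integral_exp_inner_mul_resolventWeight (hE : finrank ℝ E = 3) (hζ : 0 < ζ.im)
    (hz : (ζ ^ 2).im ≠ 0) (v : E) :
    ∫ k : E, cexp (I * ⟪k, v⟫_ℝ) * resolventWeight (ζ ^ 2) k =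
      ((2 * π) ^ 3 / (ζ ^ 2).im * (regularizedGreen ζ ‖v‖).im : ℝ) := by
  have hinv := integral_exp_inner_mul_of_integral_exp_neg_inner_mul
    (f := fun v : E => ((regularizedGreen ζ ‖v‖).im : ℂ))
    (g := fun k => ((ζ ^ 2).im * resolventWeight (ζ ^ 2) k : ℝ))
    (continuous_ofReal.comp ((continuous_im_regularizedGreen ζ).comp continuous_norm))
    (integrable_regularizedGreen_norm hE hζ).im.ofReal
    ((integrable_resolventWeight hz (by omega)).const_mul _).ofReal
    (integral_exp_neg_inner_mul_im_regularizedGreen hE hζ) v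
  have hz' : ((ζ ^ 2).im : ℂ) ≠ 0 := ofReal_ne_zero.2 hz
  rw [← mul_right_inj' hz', ← integral_const_mul]
  calc ∫ k : E, ((ζ ^ 2).im : ℂ) * (cexp (I * ⟪k, v⟫_ℝ) * resolventWeight (ζ ^ 2) k)
      = ∫ k : E, cexp (I * ⟪k, v⟫_ℝ) * ((ζ ^ 2).im * resolventWeight (ζ ^ 2) k : ℝ) := by
        simp only [ofReal_mul, mul_left_comm]
    _ = (2 * π) ^ 3 * (regularizedGreen ζ ‖v‖).im := by rw [hinv, hE]
    _ = (ζ ^ 2).im * ((2 * π) ^ 3 / (ζ ^ 2).im * (regularizedGreen ζ ‖v‖).im : ℝ) := by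
        push_cast
        field_simp

end Resolvent

section ExponentialSum

variable {ι V : Type*} [NormedAddCommGroup V] [InnerProductSpace ℝ V]
  {c : ι → ℂ} {x : ι → V}

/-- The Fourier transform `k ↦ ∑ₙ cₙ e^{-i k·xₙ}` of the point measure `∑ₙ cₙ δ_{xₙ}`. -/
noncomputable def exponentialSum (c : ι → ℂ) (x : ι → V) (k : V) : ℂ :=
  ∑' n, c n * cexp (-I * ⟪k, x n⟫_ℝ)

lemma norm_mul_exp_neg_I_mul (a : ℂ) (t : ℝ) : ‖a * cexp (-I * t)‖ = ‖a‖ := by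
  simp [norm_exp]

lemma continuous_exponentialSum (hc : Summable fun n => ‖c n‖) :
    Continuous (exponentialSum c x) :=
  continuous_tsum (fun n => by fun_prop) hc fun _ _ => (norm_mul_exp_neg_I_mul _ _).le

lemma norm_exponentialSum_le (hc : Summable fun n => ‖c n‖) (k : V) :
    ‖exponentialSum c x k‖ ≤ ∑' n, ‖c n‖ :=
  tsum_of_norm_bounded hc.hasSum fun _ => (norm_mul_exp_neg_I_mul _ _).le

lemma hasSum_norm_sq_exponentialSum (hc : Summable fun n => ‖c n‖) (k : V) :
    HasSum (fun p : ι × ι => conj (c p.1) * c p.2 * cexp (I * ⟪k, x p.1 - x p.2⟫_ℝ))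
      (‖exponentialSum c x k‖ ^ 2 : ℝ) := by
  have hnorm : Summable fun n => ‖c n * cexp (-I * ⟪k, x n⟫_ℝ)‖ := by
    simpa only [norm_mul_exp_neg_I_mul] using hc
  have hconj : Summable fun n => ‖conj (c n * cexp (-I * ⟪k, x n⟫_ℝ))‖ := by
    simpa only [RCLike.norm_conj] using hnorm
  have hsq : ((‖exponentialSum c x k‖ ^ 2 : ℝ) : ℂ) =
      conj (exponentialSum c x k) * exponentialSum c x k := by
    rw [conj_mul', ofReal_pow]
  have hterm (p : ι × ι) : conj (c p.1) * c p.2 * cexp (I * ⟪k, x p.1 - x p.2⟫_ℝ) =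
      conj (c p.1 * cexp (-I * ⟪k, x p.1⟫_ℝ)) * (c p.2 * cexp (-I * ⟪k, x p.2⟫_ℝ)) := by
    rw [map_mul, ← exp_conj, mul_mul_mul_comm, ← Complex.exp_add, inner_sub_right]
    simp only [map_mul, map_neg, conj_I, conj_ofReal, neg_neg, ofReal_sub]
    ring_nf
  simp only [hterm, hsq]
  rw [exponentialSum, conj_tsum, tsum_mul_tsum_of_summable_norm hconj hnorm]
  exact (summable_mul_of_summable_norm hconj hnorm).hasSum

variable [MeasurableSpace V] [OpensMeasurableSpace V] {μ : Measure V}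

lemma integrable_norm_sq_exponentialSum_mul (hc : Summable fun n => ‖c n‖) {w : V → ℝ}
    (hw : Integrable w μ) : Integrable (fun k => ‖exponentialSum c x k‖ ^ 2 * w k) μ :=
  hw.bdd_mul (c := (∑' n, ‖c n‖) ^ 2)
    ((continuous_exponentialSum hc).norm.pow 2).aestronglyMeasurable (.of_forall fun k => by
      rw [norm_pow, norm_norm]
      gcongr
      exact norm_exponentialSum_le hc k)

lemma hasSum_integral_norm_sq_exponentialSum_mul [Countable ι] (hc : Summable fun n => ‖c n‖)
    {w : V → ℝ} (hw : Integrable w μ) :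
    HasSum (fun p : ι × ι =>
        conj (c p.1) * c p.2 * ∫ k, cexp (I * ⟪k, x p.1 - x p.2⟫_ℝ) * w k ∂μ)
      (∫ k, ‖exponentialSum c x k‖ ^ 2 * w k ∂μ : ℝ) := by
  have h_int (p : ι × ι) : Integrable (fun k =>
      conj (c p.1) * c p.2 * (cexp (I * ⟪k, x p.1 - x p.2⟫_ℝ) * w k)) μ :=
    (integrable_exp_mul_of_re_eq_zero (by fun_prop) (by simp) hw.ofReal).const_mul _
  have hnorm (p : ι × ι) (k : V) :
      ‖conj (c p.1) * c p.2 * (cexp (I * ⟪k, x p.1 - x p.2⟫_ℝ) * w k)‖ =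
        ‖c p.1‖ * ‖c p.2‖ * ‖w k‖ := by
    simp only [norm_mul, RCLike.norm_conj, norm_exp_I_mul_ofReal, one_mul, norm_real]
  have hsum : Summable fun p : ι × ι => ∫ k,
      ‖conj (c p.1) * c p.2 * (cexp (I * ⟪k, x p.1 - x p.2⟫_ℝ) * w k)‖ ∂μ := by
    simp only [hnorm, integral_const_mul]
    exact (hc.mul_of_nonneg hc (fun _ => norm_nonneg _) fun _ => norm_nonneg _).mul_right _
  have hmain := hasSum_integral_of_summable_integral_norm h_int hsum
  simp only [integral_const_mul] at hmain
  have hexpand (k : V) : ((‖exponentialSum c x k‖ ^ 2 * w k : ℝ) : ℂ) =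
      ∑' p : ι × ι, conj (c p.1) * c p.2 * (cexp (I * ⟪k, x p.1 - x p.2⟫_ℝ) * w k) := by
    simp only [← mul_assoc, tsum_mul_right]
    rw [(hasSum_norm_sq_exponentialSum hc k).tsum_eq, ofReal_mul]
  simpa only [← integral_complex_ofReal, hexpand] using hmain

end ExponentialSum

section DoubleSeries

variable {ι : Type*}

lemma hasSum_conj_mul_mul_im {c : ι → ℂ} {K : ι × ι → ℂ} {S : ℂ} (hK : ∀ p, K p.swap = K p)
    (hS : HasSum (fun p : ι × ι => conj (c p.1) * c p.2 * K p) S) :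
    HasSum (fun p : ι × ι => conj (c p.1) * c p.2 * (K p).im) (S.im : ℂ) := by
  have hswap : HasSum (fun p : ι × ι => conj (c p.1) * c p.2 * conj (K p)) (conj S) := by
    rw [← (Equiv.prodComm ι ι).hasSum_iff]
    simpa [Function.comp_def, hK, mul_comm (conj _)] using hasSum_conj'.2 hS
  have hterm (p : ι × ι) : conj (c p.1) * c p.2 * ((K p).im : ℂ) =
      (conj (c p.1) * c p.2 * K p - conj (c p.1) * c p.2 * conj (K p)) / (2 * I) := by
    rw [im_eq_sub_conj]
    ring
  rw [im_eq_sub_conj S]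
  simpa only [hterm] using (hS.sub hswap).div_const (2 * I)

variable {α : Type*} [DecidableEq ι] [AddCommMonoid α] [TopologicalSpace α] [ContinuousAdd α]

lemma hasSum_prod_of_diag_of_offDiag {f : ι × ι → α} {a b : α}
    (hdiag : HasSum (fun n => f (n, n)) a)
    (hoff : HasSum (fun p : ι × ι => if p.1 = p.2 then 0 else f p) b) : HasSum f (a + b) := by
  have hinj : Function.Injective fun n : ι => (n, n) :=
    Function.LeftInverse.injective (g := Prod.fst) fun _ => rfl
  have hdiag' : HasSum (fun p : ι × ι => if p.1 = p.2 then f p else 0) a := by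
    rw [← hinj.hasSum_iff]
    · simpa [Function.comp_def] using hdiag
    · rintro ⟨m, n⟩ h
      exact if_neg fun hmn : m = n => h ⟨m, by rw [hmn]⟩
  convert hdiag'.add hoff using 2 with p
  split_ifs <;> simp

end DoubleSeries

section GreenSeries

variable {ι E : Type*} [NormedAddCommGroup E] {c : ι → ℂ} {x : ι → E} {ζ : ℂ}

lemma norm_regularizedGreen_le (hζ : 0 < ζ.im) {r : ℝ} (hr : 0 < r) :
    ‖regularizedGreen ζ r‖ ≤ 1 / (4 * π) * (1 / r) := by
  rw [norm_regularizedGreen hr, one_div_mul_one_div]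
  gcongr
  exact exp_le_one_iff.2 (by nlinarith)

variable [DecidableEq ι]

lemma summable_offDiag_regularizedGreen (hζ : 0 < ζ.im) (hx : Function.Injective x)
    (hc2 : Summable fun p : ι × ι =>
      if p.1 = p.2 then 0 else ‖c p.1‖ * ‖c p.2‖ / ‖x p.1 - x p.2‖) :
    Summable fun p : ι × ι => if p.1 = p.2 then 0 else
      conj (c p.1) * c p.2 * regularizedGreen ζ ‖x p.1 - x p.2‖ := by
  refine (hc2.mul_left (1 / (4 * π))).of_norm_bounded fun p => ?_
  split_ifs with h
  · simp
  · have hr : 0 < ‖x p.1 - x p.2‖ := norm_sub_pos_iff.2 (hx.ne h)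
    calc ‖conj (c p.1) * c p.2 * regularizedGreen ζ ‖x p.1 - x p.2‖‖
        = ‖c p.1‖ * ‖c p.2‖ * ‖regularizedGreen ζ ‖x p.1 - x p.2‖‖ := by
          simp only [norm_mul, RCLike.norm_conj]
      _ ≤ ‖c p.1‖ * ‖c p.2‖ * (1 / (4 * π) * (1 / ‖x p.1 - x p.2‖)) := by
          gcongr
          exact norm_regularizedGreen_le hζ hr
      _ = 1 / (4 * π) * (‖c p.1‖ * ‖c p.2‖ / ‖x p.1 - x p.2‖) := by ring

lemma hasSum_regularizedGreen (hζ : 0 < ζ.im) (hx : Function.Injective x)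
    (hc : Summable fun n => ‖c n‖)
    (hc2 : Summable fun p : ι × ι =>
      if p.1 = p.2 then 0 else ‖c p.1‖ * ‖c p.2‖ / ‖x p.1 - x p.2‖) :
    HasSum (fun p : ι × ι => conj (c p.1) * c p.2 * regularizedGreen ζ ‖x p.1 - x p.2‖)
      (I * ζ / (4 * π : ℝ) * (∑' n, ‖c n‖ ^ 2 : ℝ) +
        ∑' p : ι × ι, if p.1 = p.2 then 0 else conj (c p.1) * c p.2 *
          (cexp (I * ζ * ‖x p.1 - x p.2‖) / (4 * π * ‖x p.1 - x p.2‖ : ℝ))) := by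
  have hsq : Summable fun n => ‖c n‖ ^ 2 := by
    simpa only [sq, Function.comp_def] using (hc.mul_of_nonneg hc (fun _ => norm_nonneg _) fun _ =>
      norm_nonneg _).comp_injective (Function.LeftInverse.injective (g := Prod.fst)
        (f := fun n => (n, n)) fun _ => rfl)
  have hdiag : HasSum (fun n => conj (c n) * c n * regularizedGreen ζ ‖x n - x n‖)
      (I * ζ / (4 * π : ℝ) * (∑' n, ‖c n‖ ^ 2 : ℝ)) := by
    simpa only [sub_self, norm_zero, regularizedGreen, if_true, conj_mul', ofReal_pow,
      mul_comm _ (I * ζ / _)] using (hasSum_ofReal.2 hsq.hasSum).mul_left (I * ζ / (4 * π : ℝ))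
  have hoff (p : ι × ι) :
      (if p.1 = p.2 then 0 else conj (c p.1) * c p.2 *
        (cexp (I * ζ * ‖x p.1 - x p.2‖) / (4 * π * ‖x p.1 - x p.2‖ : ℝ))) =
      if p.1 = p.2 then 0 else conj (c p.1) * c p.2 * regularizedGreen ζ ‖x p.1 - x p.2‖ :=
    ite_congr rfl (fun _ => rfl) fun h => by
      rw [regularizedGreen, if_neg (norm_sub_pos_iff.2 (hx.ne h)).ne']
  simp only [hoff]
  exact hasSum_prod_of_diag_of_offDiag hdiag
    (summable_offDiag_regularizedGreen hζ hx hc2).hasSum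

end GreenSeries

section Main

variable {ι E : Type*} [Countable ι] [NormedAddCommGroup E] [InnerProductSpace ℝ E]
  [FiniteDimensional ℝ E] [MeasurableSpace E] [BorelSpace E]

lemma im_eq_integral_norm_sq_exponentialSum_mul_resolventWeight (hE : finrank ℝ E = 3) {ζ : ℂ}
    (hζ : 0 < ζ.im) (hz : (ζ ^ 2).im ≠ 0) {c : ι → ℂ} (hc : Summable fun n => ‖c n‖) {x : ι → E}
    {S : ℂ} (hS : HasSum
      (fun p : ι × ι => conj (c p.1) * c p.2 * regularizedGreen ζ ‖x p.1 - x p.2‖) S) :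
    1 / (ζ ^ 2).im * S.im =
      1 / (2 * π) ^ 3 * ∫ k, ‖exponentialSum c x k‖ ^ 2 * resolventWeight (ζ ^ 2) k := by
  have him := (hasSum_conj_mul_mul_im (fun p => by rw [Prod.fst_swap, Prod.snd_swap, norm_sub_rev])
    hS).mul_left ((2 * π) ^ 3 / (ζ ^ 2).im : ℂ)
  have hintegral := hasSum_integral_norm_sq_exponentialSum_mul (x := x) hc
    (integrable_resolventWeight hz (by omega))
  have hterm (p : ι × ι) : conj (c p.1) * c p.2 *
      ∫ k, cexp (I * ⟪k, x p.1 - x p.2⟫_ℝ) * resolventWeight (ζ ^ 2) k =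
      (2 * π) ^ 3 / (ζ ^ 2).im *
        (conj (c p.1) * c p.2 * (regularizedGreen ζ ‖x p.1 - x p.2‖).im) := by
    rw [integral_exp_inner_mul_resolventWeight hE hζ hz]
    push_cast
    ring
  simp only [hterm] at hintegral
  have hvalue : ∫ k, ‖exponentialSum c x k‖ ^ 2 * resolventWeight (ζ ^ 2) k =
      (2 * π) ^ 3 / (ζ ^ 2).im * S.im := by
    exact_mod_cast hintegral.unique him
  rw [hvalue]
  field_simp

theorem stmt7_general [DecidableEq ι] (hE : finrank ℝ E = 3) (z ζ : ℂ) (hz : z.im ≠ 0)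
    (hζ2 : ζ ^ 2 = z) (hζ : 0 < ζ.im) (x : ι → E) (hx : Function.Injective x)
    (c : ι → ℂ) (hc : Summable fun n => ‖c n‖)
    (hc2 : Summable fun p : ι × ι =>
      if p.1 = p.2 then 0 else ‖c p.1‖ * ‖c p.2‖ / ‖x p.1 - x p.2‖) :
    Integrable (fun k : E =>
      ‖exponentialSum c x k‖ ^ 2 / ((‖k‖ ^ 2 - z.re) ^ 2 + z.im ^ 2)) ∧
    (1 / z.im) * (I * ζ / (4 * π : ℝ) * (∑' n, ‖c n‖ ^ 2 : ℝ)
      + ∑' p : ι × ι, if p.1 = p.2 then 0 else conj (c p.1) * c p.2 *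
          (cexp (I * ζ * ‖x p.1 - x p.2‖) / (4 * π * ‖x p.1 - x p.2‖ : ℝ))).im
      = (1 / (2 * π) ^ 3) *
        ∫ k : E, ‖exponentialSum c x k‖ ^ 2 / ((‖k‖ ^ 2 - z.re) ^ 2 + z.im ^ 2) ∧
    0 ≤ (1 / z.im) * (I * ζ / (4 * π : ℝ) * (∑' n, ‖c n‖ ^ 2 : ℝ)
      + ∑' p : ι × ι, if p.1 = p.2 then 0 else conj (c p.1) * c p.2 *
          (cexp (I * ζ * ‖x p.1 - x p.2‖) / (4 * π * ‖x p.1 - x p.2‖ : ℝ))).im := by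
  subst hζ2
  have h_int : Integrable fun k : E => ‖exponentialSum c x k‖ ^ 2 * resolventWeight (ζ ^ 2) k :=
    integrable_norm_sq_exponentialSum_mul hc (integrable_resolventWeight hz (by omega))
  have heq := im_eq_integral_norm_sq_exponentialSum_mul_resolventWeight hE hζ hz hc
    (hasSum_regularizedGreen hζ hx hc hc2)
  simp only [resolventWeight, mul_one_div] at h_int heq
  exact ⟨h_int, heq, heq ▸ by positivity⟩

end Main

/-- For nonreal `z` with square root `ζ` (with `Im ζ > 0`), pairwise
distinct points `x_n ∈ ℝ³` and `c : ℤ → ℂ` with `Σ|c_n| < ∞` and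
`Σ_{m≠n} |c_m||c_n|/|x_m - x_n| < ∞`, the integral on the right below is finite and
`(1/Im z)·Im[(iζ/4π) Σ|c_n|² + Σ_{m≠n} conj(c_m) c_n g(ζ; x_m - x_n)]
  = (1/(2π)³) ∫ |Σ c_n e^{-i k·x_n}|² / ((|k|² - Re z)² + (Im z)²) dk`, which is
in particular nonnegative. -/
theorem stmt7 (z ζ : ℂ) (hz : z.im ≠ 0) (hζ2 : ζ ^ 2 = z) (hζ : 0 < ζ.im)
    (x : ℤ → EuclideanSpace ℝ (Fin 3)) (hx : Function.Injective x)
    (c : ℤ → ℂ) (hc : Summable fun n : ℤ => ‖c n‖)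
    (hc2 : Summable fun p : ℤ × ℤ =>
      if p.1 = p.2 then 0 else ‖c p.1‖ * ‖c p.2‖ / ‖x p.1 - x p.2‖) :
    Integrable (fun k : EuclideanSpace ℝ (Fin 3) =>
      ‖hhat c x k‖ ^ 2 / ((‖k‖ ^ 2 - z.re) ^ 2 + z.im ^ 2)) volume ∧
    (1 / z.im) * ((Complex.I * ζ / ((4 * Real.pi : ℝ) : ℂ))
        * ((∑' n : ℤ, ‖c n‖ ^ 2 : ℝ) : ℂ)
      + ∑' p : ℤ × ℤ, if p.1 = p.2 then 0 else
          starRingEnd ℂ (c p.1) * c p.2 * greenK ζ (x p.1 - x p.2)).im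
      = (1 / (2 * Real.pi) ^ 3) *
        ∫ k : EuclideanSpace ℝ (Fin 3),
          ‖hhat c x k‖ ^ 2 / ((‖k‖ ^ 2 - z.re) ^ 2 + z.im ^ 2) ∧
    0 ≤ (1 / z.im) * ((Complex.I * ζ / ((4 * Real.pi : ℝ) : ℂ))
        * ((∑' n : ℤ, ‖c n‖ ^ 2 : ℝ) : ℂ)
      + ∑' p : ℤ × ℤ, if p.1 = p.2 then 0 else
          starRingEnd ℂ (c p.1) * c p.2 * greenK ζ (x p.1 - x p.2)).im := by
  exact stmt7_general finrank_euclideanSpace_fin z ζ hz hζ2 hζ x hx c hc hc2
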